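/- arXiv:math/0701149 — 2 statements merged into one kernel-verified Lean document; each statement's English description precedes it below -/
import Mathlib

section
/- For every positive integer n, the length spectrum of n equals the union of the set of odd divisors k of n with k^2 < 2n and the set of numbers 2n/k where k is an odd divisor of n with k^2 > 2n. -/
/-- `IsDecomp n a m` means the `m` consecutive positive integers
`a+1, a+2, …, a+m` form a decomposition of `n`. -/
def IsDecomp (n a m : ℕ) : Prop :=
  1 ≤ m ∧ (Finset.range m).sum (fun i => a + i + 1) = n

/-- The length spectrum of `n`: the set of lengths of decompositions of `n`. -/
def Lspec (n : ℕ) : Set ℕ := {m | ∃ a, IsDecomp n a m}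

theorem sum_aux (a m : ℕ) :
    2 * (Finset.range m).sum (fun i => a + i + 1) = m * (2 * a + m + 1) := by
  induction m with
  | zero => simp
  | succ m ih => rw [Finset.sum_range_succ, mul_add, ih]; ring

theorem isDecomp_iff_aux (n a m : ℕ) :
    IsDecomp n a m ↔ 1 ≤ m ∧ 2 * n = m * (2 * a + m + 1) := by
  unfold IsDecomp
  rw [← sum_aux a m]
  constructor <;> rintro ⟨h1, h2⟩ <;> exact ⟨h1, by omega⟩

/-- The length spectrum of a positive integer `n` equals the union of the set
of odd divisors `k` of `n` with `k² < 2n` and the set of numbers `2n/k` where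
`k` is an odd divisor of `n` with `k² > 2n`. -/
theorem lspec_eq_union (n : ℕ) (hn : 0 < n) :
    Lspec n =
      {k | k ∣ n ∧ Odd k ∧ k ^ 2 < 2 * n} ∪
        {m | ∃ k, k ∣ n ∧ Odd k ∧ 2 * n < k ^ 2 ∧ m = 2 * n / k} := by
  ext m
  simp only [Lspec, Set.mem_union, Set.mem_setOf_eq, isDecomp_iff_aux]
  constructor
  · rintro ⟨a, hm, h⟩
    rcases Nat.even_or_odd' m with ⟨c, rfl | rfl⟩
    · right
      have hc : n = (2 * a + 2 * c + 1) * c := by nlinarith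
      refine ⟨2 * a + 2 * c + 1, ⟨c, hc⟩, ⟨a + c, by ring⟩, ?_, ?_⟩
      · rw [h]; nlinarith
      · rw [h, Nat.mul_div_cancel _ (by omega)]
    · left
      refine ⟨⟨a + c + 1, by nlinarith⟩, ⟨c, rfl⟩, ?_⟩
      rw [h]; nlinarith
  · rintro (⟨⟨c, rfl⟩, ⟨j, rfl⟩, h⟩ | ⟨k, ⟨c, rfl⟩, ⟨j, rfl⟩, h, rfl⟩)
    · have h1 : 2 * j + 1 < 2 * c := by
        by_contra hh
        push Not at hh
        nlinarith [Nat.mul_le_mul_left (2 * j + 1) hh]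
      obtain ⟨a, rfl⟩ : ∃ a, c = a + j + 1 := ⟨c - j - 1, by omega⟩
      exact ⟨a, by omega, by ring⟩
    · have h1 : 2 * c < 2 * j + 1 := by
        by_contra hh
        push Not at hh
        nlinarith [Nat.mul_le_mul_left (2 * j + 1) hh]
      have hc : 0 < c := Nat.pos_of_mul_pos_left hn
      obtain ⟨a, rfl⟩ : ∃ a, j = a + c := ⟨j - c, by omega⟩
      have e : 2 * ((2 * (a + c) + 1) * c) / (2 * (a + c) + 1) = 2 * c := by
        rw [show 2 * ((2 * (a + c) + 1) * c) = 2 * c * (2 * (a + c) + 1) by ring]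
        exact Nat.mul_div_cancel _ (by omega)
      rw [e]
      exact ⟨a, by omega, by ring⟩
end

section
/- A positive integer n has at least one nontrivial decomposition and all of its nontrivial decompositions are even if and only if n = 2^d · k for some d ≥ 0 and some odd prime k with k > 2^(d+1). -/
theorem isDecomp_iff_mul (n a m : ℕ) :
    IsDecomp n a m ↔ 1 ≤ m ∧ m * (2 * a + m + 1) = 2 * n := by
  have h : ∀ m : ℕ, 2 * (Finset.range m).sum (fun i => a + i + 1) = m * (2 * a + m + 1) := by
    intro m
    induction m with
    | zero => simp
    | succ k ih =>
      rw [Finset.sum_range_succ, mul_add, ih]; ring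
  unfold IsDecomp
  rw [← h m]
  constructor
  · rintro ⟨h1, h2⟩
    exact ⟨h1, by rw [h2]⟩
  · rintro ⟨h1, h2⟩
    exact ⟨h1, by omega⟩

theorem odd_dvd_two_pow {x e : ℕ} (hx : Odd x) (h : x ∣ 2 ^ e) : x = 1 := by
  have : Nat.Coprime x (2 ^ e) := Nat.Coprime.pow_right _ hx.coprime_two_right
  exact Nat.Coprime.eq_one_of_dvd this h

/-- A positive integer `n` has at least one nontrivial decomposition and all of
its nontrivial decompositions are even if and only if `n = 2^d * k` for some
`d ≥ 0` and some odd prime `k` with `k > 2^(d+1)`. -/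
theorem only_even_nontrivial_decompositions_iff (n : ℕ) (hn : 0 < n) :
    ((∃ a m : ℕ, IsDecomp n a m ∧ m ≠ 1) ∧
        (∀ a m : ℕ, IsDecomp n a m → m ≠ 1 → Even m)) ↔
      ∃ d k : ℕ, k.Prime ∧ Odd k ∧ 2 ^ (d + 1) < k ∧ n = 2 ^ d * k := by
  simp only [isDecomp_iff_mul]
  constructor
  · rintro ⟨⟨a, m, ⟨hm, hmul⟩, hm1⟩, hall⟩
    obtain ⟨d, q, hq, hnq⟩ := Nat.exists_eq_two_pow_mul_odd hn.ne'
    have hq1 : q ≠ 1 := by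
      rintro rfl
      have h2 : m * (2 * a + m + 1) = 2 ^ (d + 1) := by rw [hmul, hnq]; ring
      rcases Nat.even_or_odd m with he | ho
      · have := odd_dvd_two_pow (x := 2 * a + m + 1) (e := d + 1)
          (by obtain ⟨t, rfl⟩ := he; exact ⟨a + t, by ring⟩) ⟨m, by rw [← h2]; ring⟩
        omega
      · exact hm1 (odd_dvd_two_pow ho ⟨_, h2.symm⟩)
    have hp : q.minFac.Prime := Nat.minFac_prime hq1
    obtain ⟨r, hr⟩ := Nat.minFac_dvd q
    have hmin : ∀ x, 2 ≤ x → x ∣ q → q.minFac ≤ x := fun x h1 h2 => Nat.minFac_le_of_dvd h1 h2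
    generalize q.minFac = p at *
    have hpo : Odd p := by
      rw [hr] at hq; exact (Nat.odd_mul.1 hq).1
    have key : 2 ^ d * r * 2 < p := by
      by_contra hcon
      obtain ⟨t, ht⟩ := hpo
      have := hall (2 ^ d * r - t - 1) p ⟨hp.one_lt.le, ?_⟩ hp.one_lt.ne'
      · rw [ht] at this
        exact (Nat.not_even_iff_odd.2 ⟨t, rfl⟩) this
      · have : 2 * (2 ^ d * r - t - 1) + p + 1 = 2 * (2 ^ d * r) := by omega
        rw [this, hnq, hr]; ring
    have hd : 1 ≤ 2 ^ d := Nat.one_le_two_pow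
    have hr1 : r = 1 := by
      by_contra hne
      have hr0 : r ≠ 0 := by
        rintro rfl
        simp at hr
        subst hr
        simp at hq
      have := hmin r (by omega) ⟨p, by rw [hr]; ring⟩
      nlinarith
    subst hr1
    refine ⟨d, p, hp, hpo, ?_, by rw [hnq, hr, mul_one]⟩
    rw [pow_succ]; omega
  · rintro ⟨d, k, hk, hko, hlt, rfl⟩
    have hd : 1 ≤ 2 ^ d := Nat.one_le_two_pow
    constructor
    · obtain ⟨t, ht⟩ := hko
      refine ⟨t - 2 ^ d, 2 ^ (d + 1), ⟨Nat.one_le_two_pow, ?_⟩, ?_⟩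
      · have : 2 * (t - 2 ^ d) + 2 ^ (d + 1) + 1 = k := by
          rw [pow_succ] at *; omega
        rw [this]; ring
      · rw [pow_succ]; omega
    · rintro a m ⟨hm, hmul⟩ hm1
      by_contra hne
      have ho : Odd m := Nat.not_even_iff_odd.1 hne
      have h2 : m * (2 * a + m + 1) = 2 ^ (d + 1) * k := by rw [hmul]; ring
      have hc : Nat.Coprime m (2 ^ (d + 1)) :=
        Nat.Coprime.pow_right _ ho.coprime_two_right
      have hdk : m ∣ k := hc.dvd_of_dvd_mul_left ⟨_, h2.symm⟩
      rcases (Nat.dvd_prime hk).1 hdk with h | h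
      · exact hm1 h
      · subst h
        have : 2 * a + m + 1 = 2 ^ (d + 1) :=
          Nat.eq_of_mul_eq_mul_left hm (by rw [h2]; ring)
        omega
end
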